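/- arXiv:1609.00135 — 2 statements merged into one kernel-verified Lean document; each statement's English description precedes it below -/
import Mathlib

section
/- Let x be a solution of the heavy ball equation with vanishing damping and source term g satisfying ∫₀^∞ (1+t)^α ‖g(t)‖ dt < ∞. Then x(t) converges weakly in H as t → +∞ to some point x* ∈ argmin Φ. -/
open MeasureTheory Filter Real Set RealInnerProductSpace
open scoped Topology Asymptotics

/-!
Write the damping coefficient as `γ = 1 / τ`, with `τ` the relaxation time, and let `z` be a
minimizer with energy `E = ‖x'‖² / 2 + Φ x - Φ z`. The function
`F = τ² E + (τ ⟪x', x - z⟫ + ‖x - z‖² / 2) / 3` controls both `(τ ‖x'‖)²` and `‖x - z‖²`, and since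
`τ'` tends to `0` it eventually satisfies `F' ≤ k (1 + F) - τ E / 4` with
`k = τ'² / τ + 2 τ ‖g‖` integrable. Hence `F` converges and `τ E` is integrable. The function `τ² E`
satisfies an inequality of the same kind, so it converges too; as `τ² E / τ` is integrable while
`1 / τ` is not, its limit is `0`. Therefore `Φ x` tends to `Φ z` and `‖x - z‖²` converges for every
minimizer `z`, which by Opial's argument yields weak convergence to a minimizer.
-/

section DifferentialInequality

variable {f f' h k d : ℝ → ℝ} {T m : ℝ}

theorem sub_le_integral_of_hasDerivAt_le (hf : ∀ t ∈ Ici T, HasDerivAt f (f' t) t)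
    (hk : LocallyIntegrableOn k (Ici T)) (hle : ∀ t ∈ Ici T, f' t ≤ k t)
    {a b : ℝ} (ha : T ≤ a) (hab : a ≤ b) : f b - f a ≤ ∫ t in a..b, k t := by
  have hsub : Icc a b ⊆ Ici T := fun t ht => ha.trans ht.1
  exact intervalIntegral.sub_le_integral_of_hasDeriv_right_of_le hab
    (fun t ht => (hf t (hsub ht)).continuousAt.continuousWithinAt)
    (fun t ht => (hf t (hsub (Ioo_subset_Icc_self ht))).hasDerivWithinAt)
    (hk.integrableOn_compact_subset hsub isCompact_Icc)
    (fun t ht => hle t (hsub (Ioo_subset_Icc_self ht)))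

theorem intervalIntegrable_of_locallyIntegrableOn_Ici (hk : LocallyIntegrableOn k (Ici T))
    {a b : ℝ} (ha : T ≤ a) (hb : T ≤ b) : IntervalIntegrable k volume a b :=
  (hk.integrableOn_compact_subset (fun _ ht => (le_min ha hb).trans ht.1)
    isCompact_uIcc).intervalIntegrable

theorem exists_tendsto_of_hasDerivAt_le (hf : ∀ t ∈ Ici T, HasDerivAt f (f' t) t)
    (hm : ∀ t ∈ Ici T, m ≤ f t) (hk : IntegrableOn k (Ici T))
    (hle : ∀ t ∈ Ici T, f' t ≤ k t) : ∃ L, Tendsto f atTop (𝓝 L) := by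
  let φ : ℝ → ℝ := fun t => f (max T t) - ∫ s in T..max T t, k s
  have hφ_anti : Antitone φ := by
    intro a b hab
    have hTa := le_max_left T a
    have hTb := le_max_left T b
    have hsub := sub_le_integral_of_hasDerivAt_le hf hk.locallyIntegrableOn hle hTa
      (max_le_max_left T hab)
    have hadd := intervalIntegral.integral_add_adjacent_intervals
      (intervalIntegrable_of_locallyIntegrableOn_Ici hk.locallyIntegrableOn le_rfl hTa)
      (intervalIntegrable_of_locallyIntegrableOn_Ici hk.locallyIntegrableOn hTa hTb)
    simp only [φ]
    linarith
  have hint : Tendsto (fun t => ∫ s in T..t, k s) atTop (𝓝 (∫ s in Ioi T, k s)) :=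
    intervalIntegral_tendsto_integral_Ioi T (hk.mono_set Ioi_subset_Ici_self) tendsto_id
  have hφ_eq : (fun t => φ t + ∫ s in T..t, k s) =ᶠ[atTop] f := by
    filter_upwards [eventually_ge_atTop T] with t ht
    simp only [φ, max_eq_right ht, sub_add_cancel]
  rcases tendsto_atTop_of_antitone hφ_anti with hbot | ⟨L, hL⟩
  · have hf_bot : Tendsto f atTop atBot := (hbot.atBot_add hint).congr' hφ_eq
    obtain ⟨t, ht, hlt⟩ := ((eventually_ge_atTop T).and (hf_bot.eventually_lt_atBot m)).exists
    exact absurd (hm t ht) hlt.not_ge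
  · exact ⟨_, (hL.add hint).congr' hφ_eq⟩

theorem integrableOn_of_hasDerivAt_le_sub (hf : ∀ t ∈ Ici T, HasDerivAt f (f' t) t)
    (hm : ∀ t ∈ Ici T, m ≤ f t) (hk : IntegrableOn k (Ici T))
    (hd : LocallyIntegrableOn d (Ici T)) (hd0 : ∀ t ∈ Ici T, 0 ≤ d t)
    (hle : ∀ t ∈ Ici T, f' t ≤ k t - d t) : IntegrableOn d (Ici T) := by
  have hint : Tendsto (fun t => ∫ s in T..t, k s) atTop (𝓝 (∫ s in Ioi T, k s)) :=
    intervalIntegral_tendsto_integral_Ioi T (hk.mono_set Ioi_subset_Ici_self) tendsto_id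
  rw [integrableOn_Ici_iff_integrableOn_Ioi]
  refine integrableOn_Ioi_of_intervalIntegral_norm_bounded (f T - m + ((∫ s in Ioi T, k s) + 1)) T
    (fun t => (hd.integrableOn_compact_subset Icc_subset_Ici_self isCompact_Icc).mono_set
      Ioc_subset_Icc_self) tendsto_id ?_
  filter_upwards [eventually_ge_atTop T, hint.eventually_le_const (lt_add_one _)] with t ht hkt
  have hnorm : ∫ s in T..t, ‖d s‖ = ∫ s in T..t, d s :=
    intervalIntegral.integral_congr fun s hs =>
      norm_of_nonneg (hd0 s (by rw [uIcc_of_le ht] at hs; exact hs.1))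
  have hsub := sub_le_integral_of_hasDerivAt_le hf (hk.locallyIntegrableOn.sub hd) hle le_rfl ht
  have hsplit := intervalIntegral.integral_sub
    (intervalIntegrable_of_locallyIntegrableOn_Ici hk.locallyIntegrableOn le_rfl ht)
    (intervalIntegrable_of_locallyIntegrableOn_Ici hd le_rfl ht)
  rw [id, hnorm]
  simp only [Pi.sub_apply] at hsub
  linarith [hm t ht]

/-- A continuous-time Robbins–Siegmund lemma: passing to `log (1 + f)` removes the growth term
`k * f` without integrating factors. -/
theorem exists_tendsto_and_integrableOn_of_hasDerivAt_le
    (hf : ∀ t ∈ Ici T, HasDerivAt f (f' t) t) (hf0 : ∀ t ∈ Ici T, 0 ≤ f t)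
    (hh : IntegrableOn h (Ici T)) (hh0 : ∀ t ∈ Ici T, 0 ≤ h t)
    (hk : IntegrableOn k (Ici T)) (hk0 : ∀ t ∈ Ici T, 0 ≤ k t)
    (hd : LocallyIntegrableOn d (Ici T)) (hd0 : ∀ t ∈ Ici T, 0 ≤ d t)
    (hle : ∀ t ∈ Ici T, f' t ≤ h t + k t * f t - d t) :
    (∃ L, Tendsto f atTop (𝓝 L)) ∧ IntegrableOn d (Ici T) := by
  have hpos : ∀ t ∈ Ici T, 0 < 1 + f t := fun t ht => by linarith [hf0 t ht]
  have hlog : ∀ t ∈ Ici T, HasDerivAt (fun t => log (1 + f t)) (f' t / (1 + f t)) t :=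
    fun t ht => ((hf t ht).const_add 1).log (hpos t ht).ne'
  have hlog0 : ∀ t ∈ Ici T, 0 ≤ log (1 + f t) := fun t ht =>
    log_nonneg (by linarith [hf0 t ht])
  have hlog_le : ∀ t ∈ Ici T, f' t / (1 + f t) ≤ (h t + k t) - d t * (1 + f t)⁻¹ := by
    intro t ht
    rw [← div_eq_mul_inv, le_sub_iff_add_le, ← add_div, div_le_iff₀ (hpos t ht)]
    linarith [hle t ht, mul_nonneg (hh0 t ht) (hf0 t ht), hk0 t ht]
  have hd_div0 : ∀ t ∈ Ici T, 0 ≤ d t * (1 + f t)⁻¹ := fun t ht =>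
    mul_nonneg (hd0 t ht) (inv_nonneg.2 (hpos t ht).le)
  obtain ⟨L, hL⟩ := exists_tendsto_of_hasDerivAt_le hlog hlog0 (hh.add hk) fun t ht =>
    (hlog_le t ht).trans (sub_le_self _ (hd_div0 t ht))
  have hf_lim : Tendsto f atTop (𝓝 (exp L - 1)) := by
    refine (((continuous_exp.tendsto L).comp hL).sub_const 1).congr' ?_
    filter_upwards [eventually_ge_atTop T] with t ht
    simp only [Function.comp_apply, exp_log (hpos t ht), add_sub_cancel_left]
  have hf_cont : ContinuousOn f (Ici T) := fun t ht =>
    (hf t ht).continuousAt.continuousWithinAt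
  have hd_div : IntegrableOn (fun t => d t * (1 + f t)⁻¹) (Ici T) :=
    integrableOn_of_hasDerivAt_le_sub hlog hlog0 (hh.add hk)
      (hd.mul_continuousOn ((hf_cont.const_add 1).inv₀ fun t ht => (hpos t ht).ne')
        isClosed_Ici.isLocallyClosed) hd_div0 hlog_le
  have hd_bigO : d =O[atTop] fun t => d t * (1 + f t)⁻¹ := by
    have hmul := (Asymptotics.isBigO_refl (fun t => d t * (1 + f t)⁻¹) atTop).mul
      ((hf_lim.const_add 1).isBigO_one ℝ)
    refine hmul.congr' ?_ (.of_forall fun t => mul_one _)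
    filter_upwards [eventually_ge_atTop T] with t ht
    exact inv_mul_cancel_right₀ (hpos t ht).ne' (d t)
  exact ⟨⟨_, hf_lim⟩, hd.integrableOn_of_isBigO_atTop hd_bigO
    ⟨Ici T, Ici_mem_atTop T, hd_div⟩⟩

theorem isBigO_id_of_isBigO_one_deriv {E : Type*} [NormedAddCommGroup E] [NormedSpace ℝ E]
    {u u' : ℝ → E} (hu : ∀ t ∈ Ici T, HasDerivAt u (u' t) t)
    (hu' : u' =O[atTop] fun _ => (1 : ℝ)) : u =O[atTop] (id : ℝ → ℝ) := by
  obtain ⟨C, hC⟩ := hu'.bound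
  obtain ⟨S, hS⟩ := eventually_atTop.1 (hC.and (eventually_ge_atTop T))
  have hsub : (fun t => u t - u S) =O[atTop] fun t => t - S := by
    refine .of_bound C ?_
    filter_upwards [eventually_ge_atTop S] with t ht
    exact (convex_Ici S).norm_image_sub_le_of_norm_hasDerivWithin_le
      (fun s hs => (hu s (hS s hs).2).hasDerivWithinAt)
      (fun s hs => by simpa using (hS s hs).1) self_mem_Ici ht
  have hshift : (fun t => t - S) =O[atTop] (id : ℝ → ℝ) :=
    (Asymptotics.isBigO_refl id atTop).sub (Asymptotics.isLittleO_const_id_atTop S).isBigO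
  simpa using (hsub.trans hshift).add (Asymptotics.isLittleO_const_id_atTop (u S)).isBigO

theorem eq_zero_of_tendsto_of_integrableOn_div {w : ℝ → ℝ} {L : ℝ} (hf : Tendsto f atTop (𝓝 L))
    (hw : w =O[atTop] (id : ℝ → ℝ)) (hw0 : ∀ᶠ t in atTop, w t ≠ 0)
    (hint : IntegrableOn (fun t => f t / w t) (Ici T)) : L = 0 := by
  by_contra hL
  have hlog : Tendsto (fun t => ‖log t‖) atTop atTop :=
    tendsto_norm_atTop_atTop.comp tendsto_log_atTop
  have hconst : (fun _ => L) =O[atTop] f :=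
    ((Asymptotics.isEquivalent_const_iff_tendsto hL).2 hf).isBigO_symm
  have hinv : (fun t : ℝ => t⁻¹) =O[atTop] fun t => f t / w t := by
    have h := hconst.mul (hw.inv_rev (hw0.mono fun t ht h => absurd h ht))
    simpa only [div_eq_mul_inv, id] using (Asymptotics.isBigO_const_mul_left_iff hL).1 h
  refine not_integrableOn_of_tendsto_norm_atTop_of_deriv_isBigO_filter atTop (Ici_mem_atTop T)
    ?_ hlog ?_ hint
  · filter_upwards [eventually_ne_atTop 0] with t ht using differentiableAt_log ht
  · rwa [deriv_log']

end DifferentialInequality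

section WeakConvergence

theorem add_apply_sub_le_of_convexOn_of_hasFDerivAt {E : Type*} [NormedAddCommGroup E]
    [NormedSpace ℝ E] {s : Set E} {Φ : E → ℝ} {φ : E →L[ℝ] ℝ} {u y : E} (hΦ : ConvexOn ℝ s Φ)
    (hφ : HasFDerivAt Φ φ u) (hu : u ∈ s) (hy : y ∈ s) : Φ u + φ (y - u) ≤ Φ y := by
  have hconv := hΦ.comp_affineMap (AffineMap.lineMap u y : ℝ →ᵃ[ℝ] E)
  have hderiv : HasDerivAt (Φ ∘ AffineMap.lineMap u y) (φ (y - u)) (0 : ℝ) := by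
    rw [← AffineMap.lineMap_apply_zero (k := ℝ) u y] at hφ
    exact hφ.comp_hasDerivAt 0 AffineMap.hasDerivAt_lineMap
  have hslope := hconv.le_slope_of_hasDerivAt (x := 0) (y := 1) (by simpa) (by simpa) one_pos hderiv
  simp only [slope_def_field, Function.comp_apply, AffineMap.lineMap_apply_one,
    AffineMap.lineMap_apply_zero, sub_zero, div_one] at hslope
  linarith

variable {ι H : Type*} [NormedAddCommGroup H] [InnerProductSpace ℝ H]

theorem sub_le_inner_sub_of_convexOn_of_hasGradientAt [CompleteSpace H] {s : Set H} {Φ : H → ℝ}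
    {q u y : H} (hΦ : ConvexOn ℝ s Φ) (hq : HasGradientAt Φ q u) (hu : u ∈ s) (hy : y ∈ s) :
    Φ u - Φ y ≤ ⟪q, u - y⟫ := by
  have htangent := add_apply_sub_le_of_convexOn_of_hasFDerivAt hΦ hq.hasFDerivAt hu hy
  rw [InnerProductSpace.toDual_apply_apply, ← neg_sub, inner_neg_right] at htangent
  linarith

/-- Weak convergence of `x` to `p` along the filter `l`, tested against the vectors of `H`, which
represent all continuous linear functionals when `H` is complete. -/
def WeaklyTendsto (x : ι → H) (l : Filter ι) (p : H) : Prop :=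
  ∀ y : H, Tendsto (fun i => ⟪x i, y⟫) l (𝓝 ⟪p, y⟫)

variable {x : ι → H} {l : Filter ι}

theorem exists_weaklyTendsto_ultrafilter_of_norm_le [CompleteSpace H] {U : Ultrafilter ι} {C : ℝ}
    (hC : ∀ᶠ i in (U : Filter ι), ‖x i‖ ≤ C) : ∃ p, WeaklyTendsto x U p := by
  have hlim (y : H) : ∃ r ∈ Icc (-(C * ‖y‖)) (C * ‖y‖),
      Tendsto (fun i => ⟪x i, y⟫) U (𝓝 r) := by
    refine isCompact_Icc.ultrafilter_le_nhds (U.map fun i => ⟪x i, y⟫)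
      (le_principal_iff.2 (hC.mono fun i hi => ?_))
    rw [mem_Icc, ← abs_le]
    exact (abs_real_inner_le_norm _ _).trans (by gcongr)
  choose φ hφ_mem hφ using hlim
  let φₗ : H →ₗ[ℝ] ℝ :=
    { toFun := φ
      map_add' := fun y z => tendsto_nhds_unique (hφ (y + z)) <| by
        simpa only [inner_add_right] using (hφ y).add (hφ z)
      map_smul' := fun r y => tendsto_nhds_unique (hφ (r • y)) <| by
        simpa only [inner_smul_right, RingHom.id_apply, smul_eq_mul] using (hφ y).const_mul r }
  let φc : H →L[ℝ] ℝ := φₗ.mkContinuous C fun y => abs_le.2 (hφ_mem y)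
  refine ⟨(InnerProductSpace.toDual ℝ H).symm φc, fun y => ?_⟩
  rw [InnerProductSpace.toDual_symm_apply]
  exact hφ y

theorem le_of_weaklyTendsto_of_convexOn [CompleteSpace H] [l.NeBot] {Φ : H → ℝ} {p q : H} {m : ℝ}
    (hΦ : ConvexOn ℝ univ Φ) (hp : HasGradientAt Φ q p) (hx : WeaklyTendsto x l p)
    (hm : Tendsto (fun i => Φ (x i)) l (𝓝 m)) : Φ p ≤ m := by
  have hinner : Tendsto (fun i => ⟪q, p - x i⟫) l (𝓝 0) := by
    simpa [inner_sub_right, real_inner_comm q] using (hx q).const_sub ⟪p, q⟫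
  refine sub_nonpos.1 (le_of_tendsto_of_tendsto' (hm.const_sub (Φ p)) hinner fun i => ?_)
  exact sub_le_inner_sub_of_convexOn_of_hasGradientAt hΦ hp (mem_univ p) (mem_univ (x i))

theorem eq_of_weaklyTendsto_of_tendsto_norm_sub_sq {l₁ l₂ : Filter ι} [l₁.NeBot] [l₂.NeBot]
    {p q : H} {a b : ℝ} (hl₁ : l₁ ≤ l) (hl₂ : l₂ ≤ l)
    (ha : Tendsto (fun i => ‖x i - p‖ ^ 2) l (𝓝 a))
    (hb : Tendsto (fun i => ‖x i - q‖ ^ 2) l (𝓝 b)) (hp : WeaklyTendsto x l₁ p)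
    (hq : WeaklyTendsto x l₂ q) : p = q := by
  have hinner : Tendsto (fun i => ⟪x i, p - q⟫) l (𝓝 ((b - a + (‖p‖ ^ 2 - ‖q‖ ^ 2)) / 2)) := by
    refine (((hb.sub ha).add_const (‖p‖ ^ 2 - ‖q‖ ^ 2)).div_const 2).congr fun i => ?_
    rw [norm_sub_sq_real, norm_sub_sq_real, inner_sub_right]
    ring
  have hpq : ⟪p, p - q⟫ = ⟪q, p - q⟫ :=
    (tendsto_nhds_unique (hp _) (hinner.mono_left hl₁)).trans
      (tendsto_nhds_unique (hinner.mono_left hl₂) (hq _))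
  rw [← sub_eq_zero, ← inner_self_eq_zero (𝕜 := ℝ), inner_sub_left, hpq, sub_self]

theorem exists_weaklyTendsto_of_tendsto_norm_sub_sq [CompleteSpace H] [l.NeBot] {S : Set H}
    (hS : S.Nonempty)
    (hdist : ∀ z ∈ S, ∃ r, Tendsto (fun i => ‖x i - z‖ ^ 2) l (𝓝 r))
    (hcluster : ∀ (U : Ultrafilter ι) (p : H), ↑U ≤ l → WeaklyTendsto x U p → p ∈ S) :
    ∃ p ∈ S, WeaklyTendsto x l p := by
  obtain ⟨z, hz⟩ := hS
  obtain ⟨r, hr⟩ := hdist z hz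
  obtain ⟨C, hC⟩ : ∃ C, ∀ᶠ i in l, ‖x i‖ ≤ C := by
    refine ⟨√(r + 1) + ‖z‖, ?_⟩
    filter_upwards [hr.eventually_le_const (lt_add_one r)] with i hi
    linarith [norm_le_norm_sub_add (x i) z, le_sqrt_of_sq_le hi]
  have hexists (U : Ultrafilter ι) (hU : ↑U ≤ l) : ∃ p ∈ S, WeaklyTendsto x U p := by
    obtain ⟨p, hp⟩ := exists_weaklyTendsto_ultrafilter_of_norm_le (hU hC)
    exact ⟨p, hcluster U p hU hp, hp⟩
  obtain ⟨p, hpS, hp⟩ := hexists (.of l) (Ultrafilter.of_le l)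
  refine ⟨p, hpS, fun y => tendsto_iff_ultrafilter _ _ _ |>.2 fun V hV => ?_⟩
  obtain ⟨q, hqS, hq⟩ := hexists V hV
  obtain ⟨a, ha⟩ := hdist p hpS
  obtain ⟨b, hb⟩ := hdist q hqS
  rw [eq_of_weaklyTendsto_of_tendsto_norm_sub_sq (Ultrafilter.of_le l) hV ha hb hp hq]
  exact hq y

end WeakConvergence

namespace HeavyBall

/-- `τ`, with derivative `τ'` on `[0, ∞)`, is an admissible relaxation time, that is, the reciprocal
`1 / γ` of a damping coefficient `γ` that is bounded above and decays slowly enough for the heavy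
ball to settle. Working with `τ` rather than `γ` keeps the Lyapunov function polynomial in `τ`. -/
structure IsRelaxationTime (τ τ' : ℝ → ℝ) : Prop where
  hasDerivAt : ∀ t ∈ Ici (0 : ℝ), HasDerivAt τ (τ' t) t
  exists_pos_le : ∃ m > 0, ∀ t ∈ Ici (0 : ℝ), m ≤ τ t
  tendsto_deriv : Tendsto τ' atTop (𝓝 0)
  integrableOn_deriv_sq_div : IntegrableOn (fun t => τ' t ^ 2 / τ t) (Ici 0)

theorem IsRelaxationTime.pos {τ τ' : ℝ → ℝ} (hτ : IsRelaxationTime τ τ') {t : ℝ}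
    (ht : t ∈ Ici (0 : ℝ)) : 0 < τ t := by
  obtain ⟨m, hm, hle⟩ := hτ.exists_pos_le
  exact hm.trans_le (hle t ht)

theorem isRelaxationTime_one_add_rpow_div {c α : ℝ} (hc : 0 < c) (hα0 : 0 ≤ α) (hα1 : α < 1) :
    IsRelaxationTime (fun t => (1 + t) ^ α / c) (fun t => α * (1 + t) ^ (α - 1) / c) where
  hasDerivAt t ht := by
    have ht : 0 ≤ t := ht
    have hadd : HasDerivAt (fun t : ℝ => 1 + t) 1 t := (hasDerivAt_id t).const_add 1
    simpa using (hadd.rpow_const (p := α) (.inl (by positivity))).div_const c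
  exists_pos_le := by
    refine ⟨1 / c, by positivity, fun t ht => ?_⟩
    have ht : 0 ≤ t := ht
    gcongr
    exact one_le_rpow (by linarith) hα0
  tendsto_deriv := by
    have hpow := (tendsto_rpow_neg_atTop (sub_pos.2 hα1)).comp
      (tendsto_atTop_add_const_left atTop (1 : ℝ) tendsto_id)
    simpa [Function.comp_def] using (hpow.const_mul α).div_const c
  integrableOn_deriv_sq_div := by
    have hint : IntegrableOn (fun t : ℝ => α ^ 2 / c * (t + 1) ^ (α - 2)) (Ici 0) := by
      rw [integrableOn_Ici_iff_integrableOn_Ioi]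
      exact (integrableOn_add_rpow_Ioi_of_lt (by linarith) (by norm_num)).const_mul _
    refine hint.congr_fun (fun t ht => ?_) measurableSet_Ici
    have ht : 0 < 1 + t := by linarith [mem_Ici.1 ht]
    have hexp : (1 + t) ^ (α - 1) * (1 + t) ^ (α - 1) = (1 + t) ^ α * (1 + t) ^ (α - 2) := by
      rw [← rpow_add ht, ← rpow_add ht]
      ring_nf
    simp only [add_comm t 1]
    field_simp
    rw [pow_two ((1 + t) ^ (α - 1)), hexp]
    ring

variable {H : Type*} [NormedAddCommGroup H]

/-- `x`, with velocity `v`, solves `x'' + τ⁻¹ x' + Φ' x = g` on `[0, ∞)`, written as a first-order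
system; `Φ'` stands for the gradient of the potential. -/
structure IsTrajectory [NormedSpace ℝ H] (Φ' : H → H) (τ : ℝ → ℝ) (g x v : ℝ → H) : Prop where
  hasDerivAt_position : ∀ t ∈ Ici (0 : ℝ), HasDerivAt x (v t) t
  hasDerivAt_velocity : ∀ t ∈ Ici (0 : ℝ),
    HasDerivAt v (g t - (τ t)⁻¹ • v t - Φ' (x t)) t

variable {Φ : H → ℝ} {Φ' : H → H} {τ τ' : ℝ → ℝ} {g x v : ℝ → H} {z : H} {t T : ℝ}

/-- The mechanical energy of a trajectory, with potential energy measured from its value at `z`. -/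
noncomputable def energy (Φ : H → ℝ) (x v : ℝ → H) (z : H) (t : ℝ) : ℝ :=
  ‖v t‖ ^ 2 / 2 + (Φ (x t) - Φ z)

theorem norm_sq_le_two_mul_energy (hz : ∀ u, Φ z ≤ Φ u) :
    ‖v t‖ ^ 2 ≤ 2 * energy Φ x v z t := by
  simp only [energy]
  linarith [hz (x t)]

theorem energy_nonneg (hz : ∀ u, Φ z ≤ Φ u) : 0 ≤ energy Φ x v z t := by
  linarith [norm_sq_le_two_mul_energy (x := x) (v := v) (t := t) hz, sq_nonneg ‖v t‖]

theorem sq_mul_norm_le_two_mul_sq_mul_energy (hz : ∀ u, Φ z ≤ Φ u) :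
    (τ t * ‖v t‖) ^ 2 ≤ 2 * (τ t ^ 2 * energy Φ x v z t) := by
  rw [mul_pow, mul_left_comm]
  gcongr
  exact norm_sq_le_two_mul_energy hz

theorem tendsto_potential_of_tendsto_sq_mul_energy (hτ : IsRelaxationTime τ τ')
    (hz : ∀ u, Φ z ≤ Φ u)
    (hE : Tendsto (fun t => τ t ^ 2 * energy Φ x v z t) atTop (𝓝 0)) :
    Tendsto (fun t => Φ (x t)) atTop (𝓝 (Φ z)) := by
  obtain ⟨m, hm, hle⟩ := hτ.exists_pos_le
  have hbound : Tendsto (fun t => Φ z + (m ^ 2)⁻¹ * (τ t ^ 2 * energy Φ x v z t)) atTop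
      (𝓝 (Φ z)) := by simpa using (hE.const_mul (m ^ 2)⁻¹).const_add (Φ z)
  refine tendsto_of_tendsto_of_tendsto_of_le_of_le' tendsto_const_nhds hbound
    (.of_forall fun t => hz (x t)) ?_
  filter_upwards [eventually_ge_atTop 0] with t ht
  have henergy : Φ (x t) - Φ z ≤ energy Φ x v z t := le_add_of_nonneg_left (by positivity)
  have hscale : m ^ 2 * energy Φ x v z t ≤ τ t ^ 2 * energy Φ x v z t := by
    have := energy_nonneg (x := x) (v := v) (t := t) hz
    gcongr
    exact hle t ht
  linarith [(le_inv_mul_iff₀ (by positivity)).2 hscale]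

variable [InnerProductSpace ℝ H]

/-- The quantity measuring the distance to `z` in the Lyapunov function. Its cross term is chosen so
that the damping cancels in the derivative. -/
noncomputable def anchor (τ : ℝ → ℝ) (x v : ℝ → H) (z : H) (t : ℝ) : ℝ :=
  τ t * ⟪v t, x t - z⟫ + ‖x t - z‖ ^ 2 / 2

/-- The Lyapunov function relative to a minimizer `z`. The weight `1 / 3` is small enough for the
energy to absorb the cross term of `anchor`, both in the function and in its derivative. -/
noncomputable def lyapunov (Φ : H → ℝ) (τ : ℝ → ℝ) (x v : ℝ → H) (z : H) (t : ℝ) : ℝ :=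
  τ t ^ 2 * energy Φ x v z t + anchor τ x v z t / 3

theorem abs_mul_inner_sub_le (hτ : 0 ≤ τ t) :
    |τ t * ⟪v t, x t - z⟫| ≤ τ t * ‖v t‖ * ‖x t - z‖ := by
  rw [abs_mul, abs_of_nonneg hτ, mul_assoc]
  gcongr
  exact abs_real_inner_le_norm _ _

theorem sq_mul_norm_le_three_mul_lyapunov (hz : ∀ u, Φ z ≤ Φ u) (hτ : 0 ≤ τ t) :
    (τ t * ‖v t‖) ^ 2 ≤ 3 * lyapunov Φ τ x v z t := by
  have hcross := neg_le_of_abs_le (abs_mul_inner_sub_le (x := x) (v := v) (z := z) hτ)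
  have hgap : 0 ≤ τ t ^ 2 * (Φ (x t) - Φ z) := mul_nonneg (sq_nonneg _) (sub_nonneg.2 (hz _))
  simp only [lyapunov, energy, anchor]
  linarith [sq_nonneg (τ t * ‖v t‖ - ‖x t - z‖)]

theorem norm_sub_sq_le_nine_mul_lyapunov (hz : ∀ u, Φ z ≤ Φ u) (hτ : 0 ≤ τ t) :
    ‖x t - z‖ ^ 2 ≤ 9 * lyapunov Φ τ x v z t := by
  have hcross := neg_le_of_abs_le (abs_mul_inner_sub_le (x := x) (v := v) (z := z) hτ)
  have hgap : 0 ≤ τ t ^ 2 * (Φ (x t) - Φ z) := mul_nonneg (sq_nonneg _) (sub_nonneg.2 (hz _))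
  simp only [lyapunov, energy, anchor]
  linarith [sq_nonneg (3 * (τ t * ‖v t‖) - ‖x t - z‖)]

theorem lyapunov_nonneg (hz : ∀ u, Φ z ≤ Φ u) (hτ : 0 ≤ τ t) :
    0 ≤ lyapunov Φ τ x v z t := by
  linarith [norm_sub_sq_le_nine_mul_lyapunov (x := x) (v := v) hz hτ, sq_nonneg ‖x t - z‖]

theorem tendsto_norm_sub_sq_of_tendsto_lyapunov (hτ : IsRelaxationTime τ τ')
    (hz : ∀ u, Φ z ≤ Φ u) {L : ℝ}
    (hE : Tendsto (fun t => τ t ^ 2 * energy Φ x v z t) atTop (𝓝 0))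
    (hL : Tendsto (lyapunov Φ τ x v z) atTop (𝓝 L)) :
    Tendsto (fun t => ‖x t - z‖ ^ 2) atTop (𝓝 (6 * L)) := by
  have hcross : Tendsto (fun t => τ t * ⟪v t, x t - z⟫) atTop (𝓝 0) := by
    have hsqrt : Tendsto (fun t => √(2 * (τ t ^ 2 * energy Φ x v z t) *
        (9 * lyapunov Φ τ x v z t))) atTop (𝓝 0) := by
      simpa using ((hE.const_mul 2).mul (hL.const_mul 9)).sqrt
    refine squeeze_zero_norm' ?_ hsqrt
    filter_upwards [eventually_ge_atTop 0] with t ht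
    have hτt := (hτ.pos ht).le
    refine (abs_mul_inner_sub_le hτt).trans (le_sqrt_of_sq_le ?_)
    rw [mul_pow]
    exact mul_le_mul (sq_mul_norm_le_two_mul_sq_mul_energy hz)
      (norm_sub_sq_le_nine_mul_lyapunov hz hτt) (sq_nonneg _)
      (mul_nonneg zero_le_two (mul_nonneg (sq_nonneg _) (energy_nonneg hz)))
  have hlim := ((hL.sub hE).const_mul 6).sub (hcross.const_mul 2)
  simp only [sub_zero, mul_zero] at hlim
  refine hlim.congr fun t => ?_
  simp only [lyapunov, anchor]
  ring

theorem two_mul_mul_inner_le_add {q : ℝ} (hq : 0 < q) (s : ℝ) (u w : H) :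
    2 * (s * ⟪u, w⟫) ≤ q * ‖u‖ ^ 2 + s ^ 2 / q * ‖w‖ ^ 2 := by
  have hsq : 0 ≤ q⁻¹ * ‖q • u - s • w‖ ^ 2 := by positivity
  rw [norm_sub_sq_real, norm_smul, norm_smul, real_inner_smul_left, real_inner_smul_right,
    mul_pow, mul_pow, norm_eq_abs, norm_eq_abs, sq_abs, sq_abs] at hsq
  have : q⁻¹ * (q ^ 2 * ‖u‖ ^ 2 - 2 * (q * (s * ⟪u, w⟫)) + s ^ 2 * ‖w‖ ^ 2)
    = q * ‖u‖ ^ 2 - 2 * (s * ⟪u, w⟫) + s ^ 2 / q * ‖w‖ ^ 2 := by field_simp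
  linarith

theorem IsTrajectory.hasDerivAt_energy [CompleteSpace H] (hx : IsTrajectory Φ' τ g x v)
    (hΦ' : ∀ u, HasGradientAt Φ (Φ' u) u) (z : H) (ht : t ∈ Ici (0 : ℝ)) :
    HasDerivAt (energy Φ x v z) (⟪g t, v t⟫ - (τ t)⁻¹ * ‖v t‖ ^ 2) t := by
  have hpot : HasDerivAt (fun t => Φ (x t)) ⟪Φ' (x t), v t⟫ t := by
    rw [← InnerProductSpace.toDual_apply_apply (𝕜 := ℝ)]
    exact (hΦ' (x t)).hasFDerivAt.comp_hasDerivAt t (hx.hasDerivAt_position t ht)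
  refine (((hx.hasDerivAt_velocity t ht).norm_sq.div_const 2).add
    (hpot.sub_const (Φ z))).congr_deriv ?_
  rw [real_inner_comm, inner_sub_left, inner_sub_left, real_inner_smul_left,
    real_inner_self_eq_norm_sq]
  ring

theorem IsTrajectory.hasDerivAt_sq_mul_energy [CompleteSpace H] (hx : IsTrajectory Φ' τ g x v)
    (hτ : IsRelaxationTime τ τ') (hΦ' : ∀ u, HasGradientAt Φ (Φ' u) u) (z : H)
    (ht : t ∈ Ici (0 : ℝ)) :
    HasDerivAt (fun t => τ t ^ 2 * energy Φ x v z t)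
      (2 * τ' t * (τ t * energy Φ x v z t) - τ t * ‖v t‖ ^ 2 + τ t ^ 2 * ⟪g t, v t⟫) t := by
  refine (((hτ.hasDerivAt t ht).pow 2).mul (hx.hasDerivAt_energy hΦ' z ht)).congr_deriv ?_
  have := (hτ.pos ht).ne'
  simp only [Pi.pow_apply]
  field_simp
  ring

theorem IsTrajectory.hasDerivAt_anchor (hx : IsTrajectory Φ' τ g x v)
    (hτ : IsRelaxationTime τ τ') (z : H) (ht : t ∈ Ici (0 : ℝ)) :
    HasDerivAt (anchor τ x v z) (τ' t * ⟪v t, x t - z⟫ + τ t * ‖v t‖ ^ 2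
      + τ t * ⟪g t, x t - z⟫ - τ t * ⟪Φ' (x t), x t - z⟫) t := by
  have hsub := (hx.hasDerivAt_position t ht).sub_const z
  refine (((hτ.hasDerivAt t ht).mul ((hx.hasDerivAt_velocity t ht).inner ℝ hsub)).add
    (hsub.norm_sq.div_const 2)).congr_deriv ?_
  have := (hτ.pos ht).ne'
  rw [inner_sub_left, inner_sub_left, real_inner_smul_left, real_inner_self_eq_norm_sq,
    real_inner_comm (v t)]
  field_simp
  ring

theorem deriv_sq_mul_energy_le (hz : ∀ u, Φ z ≤ Φ u) (hτ : 0 ≤ τ t) (hτ' : τ' t ≤ 1 / 2) :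
    2 * τ' t * (τ t * energy Φ x v z t) - τ t * ‖v t‖ ^ 2 + τ t ^ 2 * ⟪g t, v t⟫
      ≤ (τ t * energy Φ x v z t + τ t * ‖g t‖) + τ t * ‖g t‖ * (τ t ^ 2 * energy Φ x v z t) := by
  have hE : 0 ≤ τ t * energy Φ x v z t := mul_nonneg hτ (energy_nonneg hz)
  have hdrift : 2 * τ' t * (τ t * energy Φ x v z t) ≤ τ t * energy Φ x v z t :=
    mul_le_of_le_one_left hE (by linarith)
  have hspeed : τ t * ‖v t‖ ≤ 1 + τ t ^ 2 * energy Φ x v z t := by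
    linarith [two_mul_le_add_sq (τ t * ‖v t‖) 1,
      sq_mul_norm_le_two_mul_sq_mul_energy (τ := τ) (x := x) (v := v) (t := t) hz]
  have hsource : τ t ^ 2 * ⟪g t, v t⟫ ≤ τ t * ‖g t‖ * (1 + τ t ^ 2 * energy Φ x v z t) :=
    calc τ t ^ 2 * ⟪g t, v t⟫ ≤ τ t ^ 2 * (‖g t‖ * ‖v t‖) := by
          gcongr
          exact real_inner_le_norm _ _
      _ = τ t * ‖g t‖ * (τ t * ‖v t‖) := by ring
      _ ≤ _ := by gcongr
  linarith [mul_nonneg hτ (sq_nonneg ‖v t‖)]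

theorem source_power_le (hz : ∀ u, Φ z ≤ Φ u) (hτ : 0 ≤ τ t) :
    τ t ^ 2 * ⟪g t, v t⟫ + τ t * ⟪g t, x t - z⟫ / 3
      ≤ 2 * (τ t * ‖g t‖) * (1 + lyapunov Φ τ x v z t) := by
  have hspeed := sq_mul_norm_le_three_mul_lyapunov (x := x) (v := v) hz hτ
  have hdist := norm_sub_sq_le_nine_mul_lyapunov (x := x) (v := v) hz hτ
  calc τ t ^ 2 * ⟪g t, v t⟫ + τ t * ⟪g t, x t - z⟫ / 3
      ≤ τ t ^ 2 * (‖g t‖ * ‖v t‖) + τ t * (‖g t‖ * ‖x t - z‖) / 3 := by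
        gcongr <;> exact real_inner_le_norm _ _
    _ = τ t * ‖g t‖ * (τ t * ‖v t‖ + ‖x t - z‖ / 3) := by ring
    _ ≤ τ t * ‖g t‖ * (2 * (1 + lyapunov Φ τ x v z t)) := by
        gcongr
        linarith [sq_nonneg (τ t * ‖v t‖ - 1), sq_nonneg (‖x t - z‖ / 3 - 1)]
    _ = _ := by ring

theorem deriv_lyapunov_le (hz : ∀ u, Φ z ≤ Φ u)
    (hgrad : Φ (x t) - Φ z ≤ ⟪Φ' (x t), x t - z⟫) (hτ : 0 < τ t) (hτ' : τ' t ≤ 1 / 24) :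
    2 * τ' t * (τ t * energy Φ x v z t) - τ t * ‖v t‖ ^ 2 + τ t ^ 2 * ⟪g t, v t⟫
        + (τ' t * ⟪v t, x t - z⟫ + τ t * ‖v t‖ ^ 2
          + τ t * ⟪g t, x t - z⟫ - τ t * ⟪Φ' (x t), x t - z⟫) / 3
      ≤ (τ' t ^ 2 / τ t + 2 * (τ t * ‖g t‖))
        + (τ' t ^ 2 / τ t + 2 * (τ t * ‖g t‖)) * lyapunov Φ τ x v z t
        - τ t * energy Φ x v z t / 4 := by
  have hdrift : 2 * τ' t * (τ t * energy Φ x v z t) ≤ 1 / 12 * (τ t * energy Φ x v z t) :=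
    mul_le_mul_of_nonneg_right (by linarith) (mul_nonneg hτ.le (energy_nonneg hz))
  have hcross : τ' t * ⟪v t, x t - z⟫ / 3
      ≤ τ t * ‖v t‖ ^ 2 / 4 + τ' t ^ 2 / τ t * (‖x t - z‖ ^ 2 / 9) := by
    have hyoung := two_mul_mul_inner_le_add (by positivity : 0 < 3 / 2 * τ t) (τ' t) (v t) (x t - z)
    have : τ' t ^ 2 / (3 / 2 * τ t) = 2 / 3 * (τ' t ^ 2 / τ t) := by field_simp
    rw [this] at hyoung
    linarith
  have hdist : τ' t ^ 2 / τ t * (‖x t - z‖ ^ 2 / 9)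
      ≤ τ' t ^ 2 / τ t * (1 + lyapunov Φ τ x v z t) := by
    gcongr
    linarith [norm_sub_sq_le_nine_mul_lyapunov (x := x) (v := v) hz hτ.le]
  have hsource := source_power_le (g := g) (x := x) (v := v) hz hτ.le
  have hforce := mul_le_mul_of_nonneg_left hgrad hτ.le
  have henergy : τ t * energy Φ x v z t
      = τ t * ‖v t‖ ^ 2 / 2 + τ t * (Φ (x t) - Φ z) := by
    simp only [energy]
    ring
  linarith [mul_nonneg hτ.le (sq_nonneg ‖v t‖)]

variable [CompleteSpace H]

theorem IsTrajectory.exists_tendsto_lyapunov_and_integrableOn (hx : IsTrajectory Φ' τ g x v)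
    (hτ : IsRelaxationTime τ τ') (hΦ : ConvexOn ℝ univ Φ)
    (hΦ' : ∀ u, HasGradientAt Φ (Φ' u) u) (hg : IntegrableOn (fun t => τ t * ‖g t‖) (Ici 0))
    (hz : ∀ u, Φ z ≤ Φ u) (hT0 : 0 ≤ T) (hT : ∀ t ∈ Ici T, τ' t ≤ 1 / 24) :
    (∃ L, Tendsto (lyapunov Φ τ x v z) atTop (𝓝 L)) ∧
      IntegrableOn (fun t => τ t * energy Φ x v z t) (Ici T) := by
  have hsub : Ici T ⊆ Ici 0 := Ici_subset_Ici.2 hT0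
  have hrate : IntegrableOn (fun t => τ' t ^ 2 / τ t + 2 * (τ t * ‖g t‖)) (Ici T) :=
    (hτ.integrableOn_deriv_sq_div.add (hg.const_mul 2)).mono_set hsub
  have hrate0 : ∀ t ∈ Ici T, 0 ≤ τ' t ^ 2 / τ t + 2 * (τ t * ‖g t‖) := fun t ht => by
    have := hτ.pos (hsub ht)
    positivity
  have hcont : ContinuousOn (fun t => τ t * energy Φ x v z t / 4) (Ici T) := fun t ht =>
    (((hτ.hasDerivAt t (hsub ht)).mul
      (hx.hasDerivAt_energy hΦ' z (hsub ht))).div_const 4).continuousAt.continuousWithinAt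
  obtain ⟨hlim, hint⟩ := exists_tendsto_and_integrableOn_of_hasDerivAt_le
    (fun t ht => (hx.hasDerivAt_sq_mul_energy hτ hΦ' z (hsub ht)).add
      ((hx.hasDerivAt_anchor hτ z (hsub ht)).div_const 3))
    (fun t ht => lyapunov_nonneg hz (hτ.pos (hsub ht)).le) hrate hrate0 hrate hrate0
    (hcont.locallyIntegrableOn measurableSet_Ici)
    (fun t ht => div_nonneg (mul_nonneg (hτ.pos (hsub ht)).le (energy_nonneg hz)) zero_le_four)
    (fun t ht => deriv_lyapunov_le hz
      (sub_le_inner_sub_of_convexOn_of_hasGradientAt hΦ (hΦ' _) (mem_univ _) (mem_univ _))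
      (hτ.pos (hsub ht)) (hT t ht))
  exact ⟨hlim, by simpa [IntegrableOn, mul_div_cancel₀] using hint.const_mul 4⟩

theorem IsTrajectory.tendsto_sq_mul_energy_zero (hx : IsTrajectory Φ' τ g x v)
    (hτ : IsRelaxationTime τ τ') (hΦ' : ∀ u, HasGradientAt Φ (Φ' u) u)
    (hg : IntegrableOn (fun t => τ t * ‖g t‖) (Ici 0))
    (hz : ∀ u, Φ z ≤ Φ u) (hT0 : 0 ≤ T) (hT : ∀ t ∈ Ici T, τ' t ≤ 1 / 2)
    (hint : IntegrableOn (fun t => τ t * energy Φ x v z t) (Ici T)) :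
    Tendsto (fun t => τ t ^ 2 * energy Φ x v z t) atTop (𝓝 0) := by
  have hsub : Ici T ⊆ Ici 0 := Ici_subset_Ici.2 hT0
  have hτ0 : ∀ t ∈ Ici T, 0 < τ t := fun t ht => hτ.pos (hsub ht)
  have hgT := hg.mono_set hsub
  have hg0 : ∀ t ∈ Ici T, 0 ≤ τ t * ‖g t‖ := fun t ht =>
    mul_nonneg (hτ0 t ht).le (norm_nonneg _)
  obtain ⟨⟨L, hL⟩, -⟩ := exists_tendsto_and_integrableOn_of_hasDerivAt_le (d := 0)
    (fun t ht => hx.hasDerivAt_sq_mul_energy hτ hΦ' z (hsub ht))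
    (fun t _ => mul_nonneg (sq_nonneg _) (energy_nonneg hz)) (hint.add hgT)
    (fun t ht => add_nonneg (mul_nonneg (hτ0 t ht).le (energy_nonneg hz)) (hg0 t ht)) hgT hg0
    locallyIntegrableOn_zero (fun _ _ => le_rfl)
    (fun t ht => (deriv_sq_mul_energy_le hz (hτ0 t ht).le (hT t ht)).trans_eq (sub_zero _).symm)
  have hdiv : IntegrableOn (fun t => τ t ^ 2 * energy Φ x v z t / τ t) (Ici T) :=
    hint.congr_fun (fun t ht => by have := (hτ0 t ht).ne'; field_simp) measurableSet_Ici
  have hτ_ne : ∀ᶠ t in atTop, τ t ≠ 0 :=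
    (eventually_ge_atTop T).mono fun t ht => (hτ0 t ht).ne'
  rwa [eq_zero_of_tendsto_of_integrableOn_div hL
    (isBigO_id_of_isBigO_one_deriv hτ.hasDerivAt (hτ.tendsto_deriv.isBigO_one ℝ)) hτ_ne hdiv] at hL

end HeavyBall

theorem heavy_ball_weak_convergence_general {H : Type*} [NormedAddCommGroup H]
    [InnerProductSpace ℝ H] [CompleteSpace H] {Φ : H → ℝ} {Φ' : H → H} {τ τ' : ℝ → ℝ}
    {g x v : ℝ → H} (hΦ : ConvexOn ℝ univ Φ) (hΦ' : ∀ u, HasGradientAt Φ (Φ' u) u)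
    (hmin : {z | ∀ u, Φ z ≤ Φ u}.Nonempty) (hτ : HeavyBall.IsRelaxationTime τ τ')
    (hx : HeavyBall.IsTrajectory Φ' τ g x v)
    (hg : IntegrableOn (fun t => τ t * ‖g t‖) (Ici 0)) :
    ∃ z ∈ {z | ∀ u, Φ z ≤ Φ u}, WeaklyTendsto x atTop z := by
  obtain ⟨T, hT0, hT⟩ : ∃ T, 0 ≤ T ∧ ∀ t ∈ Ici T, τ' t ≤ 1 / 24 := by
    have hsmall : ∀ᶠ t in atTop, τ' t ≤ 1 / 24 := hτ.tendsto_deriv.eventually_le_const (by norm_num)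
    obtain ⟨T, hT⟩ := eventually_atTop.1 (hsmall.and (eventually_ge_atTop 0))
    exact ⟨T, (hT T le_rfl).2, fun t ht => (hT t ht).1⟩
  have hlyapunov (z : H) (hz : ∀ u, Φ z ≤ Φ u) :=
    hx.exists_tendsto_lyapunov_and_integrableOn hτ hΦ hΦ' hg hz hT0 hT
  have henergy (z : H) (hz : ∀ u, Φ z ≤ Φ u) :
      Tendsto (fun t => τ t ^ 2 * HeavyBall.energy Φ x v z t) atTop (𝓝 0) :=
    hx.tendsto_sq_mul_energy_zero hτ hΦ' hg hz hT0
      (fun t ht => (hT t ht).trans (by norm_num)) (hlyapunov z hz).2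
  refine exists_weaklyTendsto_of_tendsto_norm_sub_sq hmin (fun z hz => ?_) fun U p hU hp => ?_
  · obtain ⟨L, hL⟩ := (hlyapunov z hz).1
    exact ⟨_, HeavyBall.tendsto_norm_sub_sq_of_tendsto_lyapunov hτ hz (henergy z hz) hL⟩
  · obtain ⟨z, hz⟩ := hmin
    have hpot := HeavyBall.tendsto_potential_of_tendsto_sq_mul_energy hτ hz (henergy z hz)
    exact fun u => (le_of_weaklyTendsto_of_convexOn hΦ (hΦ' p) hp (hpot.mono_left hU)).trans (hz u)

theorem heavy_ball_weak_convergence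
    {H : Type*} [NormedAddCommGroup H] [InnerProductSpace ℝ H] [CompleteSpace H]
    (c α : ℝ) (hc : 0 < c) (hα0 : 0 ≤ α) (hα1 : α < 1)
    (Φ : H → ℝ) (Φ' : H → H) (Φstar : ℝ)
    (hΦconv : ConvexOn ℝ Set.univ Φ)
    (hΦdiff : ∀ u : H, HasGradientAt Φ (Φ' u) u)
    (hΦcont : Continuous Φ')
    (hargmin : {v : H | ∀ u, Φ v ≤ Φ u}.Nonempty)
    (hΦstar : ∀ v ∈ {v : H | ∀ u, Φ v ≤ Φ u}, Φ v = Φstar)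
    (g : ℝ → H) (hg : IntegrableOn g (Ici (0:ℝ)))
    (x x' x'' : ℝ → H)
    (hx1 : ∀ t ∈ Ici (0:ℝ), HasDerivAt x (x' t) t)
    (hx2 : ∀ t ∈ Ici (0:ℝ), HasDerivAt x' (x'' t) t)
    (hode : ∀ t ∈ Ici (0:ℝ),
      x'' t + (c / (1 + t) ^ α) • x' t + Φ' (x t) = g t)
    (hgα : IntegrableOn (fun t => (1 + t) ^ α * ‖g t‖) (Ici (0:ℝ))) :
    ∃ xstar ∈ {v : H | ∀ u, Φ v ≤ Φ u},
      ∀ y : H, Tendsto (fun t => ⟪x t, y⟫) atTop (nhds ⟪xstar, y⟫) := by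
  refine heavy_ball_weak_convergence_general (g := g) hΦconv hΦdiff hargmin
    (HeavyBall.isRelaxationTime_one_add_rpow_div hc hα0 hα1) ⟨hx1, fun t ht => ?_⟩ ?_
  · exact (hx2 t ht).congr_deriv (by rw [inv_div, ← hode t ht]; abel)
  · simpa only [IntegrableOn, div_mul_eq_mul_div] using hgα.div_const c
end

section
/- Let x be a solution of the heavy ball equation with vanishing damping and source term g satisfying ∫₀^∞ (1+t)^α ‖g(t)‖ dt < ∞. Then the energy function W(t) = ½‖x'(t)‖² + Φ(x(t)) − Φ* satisfies ∫₀^∞ (1+t)^α W(t) dt < ∞. -/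
open MeasureTheory Filter Real Set RealInnerProductSpace

/-!
Write `a = (1 + t) ^ α`, so that the damping is `c / a`, and let `z` be a minimizer of `Φ`. With
`v = a x' + (2c/3)(x - z)`, the Lyapunov function

`E = a² (Φ(x) - Φ(z)) + ‖v‖² / 2 + (c/3)(c/3 - a') ‖x - z‖²`

satisfies, by the equation and the convexity of `Φ`,

`E' ≤ a ⟪g, v⟫ - 2 (c/3 - a') a W - (c/3) a'' ‖x - z‖²`.

As soon as `c/3 - a'` is bounded below by a positive constant `δ`, both `‖v‖` and `‖x - z‖²` are
controlled by `1 + E`, hence `E' ≤ k (1 + E) - 2 δ a W` with `k = a ‖g‖ + |a''| / δ` integrable.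
A Grönwall-type argument then bounds `E` and the integral of `a W`.
-/

section Dissipation

variable {f F k : ℝ → ℝ} {s t t₀ : ℝ}

lemma add_integral_le_of_deriv_le_sub (hst : s ≤ t)
    (hF : ∀ u ∈ Icc s t, DifferentiableAt ℝ F u)
    (hf : IntegrableOn f (Icc s t)) (hk : IntegrableOn k (Icc s t))
    (hF' : ∀ u ∈ Icc s t, deriv F u ≤ k u - f u) :
    F t + ∫ u in s..t, f u ≤ F s + ∫ u in s..t, k u := by
  have increment_le := intervalIntegral.sub_le_integral_of_hasDeriv_right_of_le hst
    (fun u hu => (hF u hu).continuousAt.continuousWithinAt)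
    (fun u hu => (hF u (Ioo_subset_Icc_self hu)).hasDerivAt.hasDerivWithinAt)
    (hk.sub hf) (fun u hu => hF' u (Ioo_subset_Icc_self hu))
  have integral_eq := intervalIntegral.integral_sub
    ((intervalIntegrable_iff_integrableOn_Icc_of_le hst).2 hk)
    ((intervalIntegrable_iff_integrableOn_Icc_of_le hst).2 hf)
  simp only [Pi.sub_apply] at increment_le
  linarith

lemma integral_le_two_mul_of_deriv_le_mul_sub (hst : s ≤ t)
    (hF : ∀ u ∈ Icc s t, DifferentiableAt ℝ F u) (hF0 : ∀ u ∈ Icc s t, 0 ≤ F u)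
    (hf : IntegrableOn f (Icc s t)) (hf0 : ∀ u ∈ Icc s t, 0 ≤ f u)
    (hk : IntegrableOn k (Icc s t)) (hk0 : ∀ u ∈ Icc s t, 0 ≤ k u)
    (hk_half : ∫ u in s..t, k u ≤ 1 / 2)
    (hF' : ∀ u ∈ Icc s t, deriv F u ≤ k u * F u - f u) :
    ∫ u in s..t, f u ≤ 2 * F s := by
  obtain ⟨m, hm, hmax⟩ := isCompact_Icc.exists_isMaxOn (nonempty_Icc.2 hst)
    fun u hu => (hF u hu).continuousAt.continuousWithinAt
  have balance : ∀ r ∈ Icc s t, F r + ∫ u in s..r, f u ≤ F s + F m / 2 := by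
    intro r hr
    have hsub : Icc s r ⊆ Icc s t := Icc_subset_Icc_right hr.2
    have integral_k_le : ∫ u in s..r, k u ≤ 1 / 2 := by
      refine le_trans ?_ hk_half
      refine intervalIntegral.integral_mono_interval le_rfl hr.1 hr.2 ?_
        ((intervalIntegrable_iff_integrableOn_Icc_of_le hst).2 hk)
      exact (ae_restrict_mem measurableSet_Ioc).mono fun u hu => hk0 u (Ioc_subset_Icc_self hu)
    calc F r + ∫ u in s..r, f u
        ≤ F s + ∫ u in s..r, k u * F m := by
          refine add_integral_le_of_deriv_le_sub hr.1 (fun u hu => hF u (hsub hu))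
            (hf.mono_set hsub) ((hk.mono_set hsub).mul_const _) fun u hu => ?_
          exact (hF' u (hsub hu)).trans (sub_le_sub_right
            (mul_le_mul_of_nonneg_left (hmax (hsub hu)) (hk0 u (hsub hu))) _)
      _ = F s + (∫ u in s..r, k u) * F m := by rw [intervalIntegral.integral_mul_const]
      _ ≤ F s + 1 / 2 * F m := by gcongr; exact hF0 m hm
      _ = F s + F m / 2 := by ring
  have max_le : F m ≤ 2 * F s := by
    have : 0 ≤ ∫ u in s..m, f u :=
      intervalIntegral.integral_nonneg hm.1 fun u hu => hf0 u ⟨hu.1, hu.2.trans hm.2⟩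
    linarith [balance m hm]
  linarith [balance t (right_mem_Icc.2 hst), hF0 t (right_mem_Icc.2 hst)]

-- Instead of an exponential factor, start where the tail integral of `k` is below `1 / 2`, so that
-- the term `k * F` is absorbed by the maximum of `F`.
lemma integrableOn_Ici_of_deriv_le_mul_sub
    (hF : ∀ᶠ t in atTop, DifferentiableAt ℝ F t) (hF0 : ∀ᶠ t in atTop, 0 ≤ F t)
    (hf : ContinuousOn f (Ici t₀)) (hf0 : ∀ᶠ t in atTop, 0 ≤ f t)
    (hk : IntegrableOn k (Ici t₀)) (hk0 : ∀ᶠ t in atTop, 0 ≤ k t)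
    (hF' : ∀ᶠ t in atTop, deriv F t ≤ k t * F t - f t) :
    IntegrableOn f (Ici t₀) := by
  have tail_le : ∀ᶠ s in atTop, ∫ u in Ioi s, k u ≤ 1 / 2 :=
    (tendsto_integral_Ioi_zero tendsto_id).eventually_le_const one_half_pos
  obtain ⟨s, hs⟩ := eventually_atTop.1 <|
    hF.and <| hF0.and <| hf0.and <| hk0.and <| hF'.and <| tail_le.and <| eventually_ge_atTop t₀
  choose hF hF0 hf0 hk0 hF' tail_le hs₀ using hs
  have hs₀ : t₀ ≤ s := hs₀ s le_rfl
  have integrable_Icc (t : ℝ) : IntegrableOn f (Icc s t) :=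
    (hf.mono fun u hu => hs₀.trans hu.1).integrableOn_Icc
  have integral_le : ∀ t ≥ s, ∫ u in s..t, ‖f u‖ ≤ 2 * F s := by
    intro t hst
    have integral_k_le : ∫ u in s..t, k u ≤ 1 / 2 := by
      refine le_trans ?_ (tail_le s le_rfl)
      rw [intervalIntegral.integral_of_le hst]
      refine setIntegral_mono_set (hk.mono_set fun u hu => hs₀.trans (le_of_lt hu)) ?_
        Ioc_subset_Ioi_self.eventuallyLE
      exact (ae_restrict_mem measurableSet_Ioi).mono fun u hu => hk0 u (le_of_lt hu)
    rw [intervalIntegral.integral_congr fun u hu =>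
      norm_of_nonneg (hf0 u (uIcc_of_le hst ▸ hu).1)]
    exact integral_le_two_mul_of_deriv_le_mul_sub hst (fun u hu => hF u hu.1)
      (fun u hu => hF0 u hu.1) (integrable_Icc t) (fun u hu => hf0 u hu.1)
      (hk.mono_set fun u hu => hs₀.trans hu.1) (fun u hu => hk0 u hu.1) integral_k_le
      fun u hu => hF' u hu.1
  have integrable_Ioi : IntegrableOn f (Ioi s) :=
    integrableOn_Ioi_of_intervalIntegral_norm_bounded (2 * F s) s
      (fun t => (integrable_Icc t).mono_set Ioc_subset_Icc_self) tendsto_id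
      ((eventually_ge_atTop s).mono integral_le)
  rw [← Icc_union_Ioi_eq_Ici hs₀]
  exact (hf.mono Icc_subset_Ici_self).integrableOn_Icc.union integrable_Ioi

end Dissipation

lemma apply_sub_le_sub_of_convexOn {V : Type*} [NormedAddCommGroup V] [NormedSpace ℝ V]
    {S : Set V} {f : V → ℝ} {f' : V →L[ℝ] ℝ} {u v : V} (hf : ConvexOn ℝ S f)
    (hu : u ∈ S) (hv : v ∈ S) (hf' : HasFDerivAt f f' u) :
    f' (v - u) ≤ f v - f u := by
  let line : ℝ →ᵃ[ℝ] V := AffineMap.lineMap u v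
  have line_zero : line 0 = u := AffineMap.lineMap_apply_zero u v
  have line_one : line 1 = v := AffineMap.lineMap_apply_one u v
  have hderiv : HasDerivAt (f ∘ line) (f' (v - u)) 0 :=
    HasFDerivAt.comp_hasDerivAt (0 : ℝ) (line_zero.symm ▸ hf') AffineMap.hasDerivAt_lineMap
  have slope_ge := (hf.comp_affineMap line).le_slope_of_hasDerivAt
    (mem_preimage.2 (line_zero.symm ▸ hu)) (mem_preimage.2 (line_one.symm ▸ hv)) one_pos hderiv
  simpa [slope_def_field, line_zero, line_one] using slope_ge

/-- A positive time scale `a` on `[t₀, ∞)`, with derivatives `a'` and `a''`, for which the damping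
`c / a` is strong enough to make the energy integrable against `a`: `a'` eventually stays below a
constant smaller than `c / 3`, and `a''` is integrable. For `a t = t` this means `3 < c`. -/
structure IsDissipativeScale (c t₀ : ℝ) (a a' a'' : ℝ → ℝ) : Prop where
  pos : ∀ t ∈ Ici t₀, 0 < a t
  hasDerivAt : ∀ t ∈ Ici t₀, HasDerivAt a (a' t) t
  hasDerivAt_deriv : ∀ t ∈ Ici t₀, HasDerivAt a' (a'' t) t
  integrableOn_deriv_deriv : IntegrableOn a'' (Ici t₀)
  exists_gap : ∃ δ > 0, ∀ᶠ t in atTop, δ ≤ c / 3 - a' t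

lemma hasDerivAt_one_add_rpow (β : ℝ) {t : ℝ} (ht : 0 < 1 + t) :
    HasDerivAt (fun t : ℝ => (1 + t) ^ β) (β * (1 + t) ^ (β - 1)) t := by
  simpa using ((hasDerivAt_id t).const_add 1).rpow_const (p := β) (Or.inl ht.ne')

lemma isDissipativeScale_one_add_rpow {c α : ℝ} (hc : 0 < c) (hα : α < 1) :
    IsDissipativeScale c 0 (fun t => (1 + t) ^ α) (fun t => α * (1 + t) ^ (α - 1))
      (fun t => α * ((α - 1) * (1 + t) ^ (α - 1 - 1))) where
  pos t ht := rpow_pos_of_pos (add_pos_of_pos_of_nonneg one_pos ht) α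
  hasDerivAt t ht := hasDerivAt_one_add_rpow α (add_pos_of_pos_of_nonneg one_pos ht)
  hasDerivAt_deriv t ht :=
    (hasDerivAt_one_add_rpow (α - 1) (add_pos_of_pos_of_nonneg one_pos ht)).const_mul α
  integrableOn_deriv_deriv := by
    rw [integrableOn_Ici_iff_integrableOn_Ioi]
    simp only [add_comm (1 : ℝ)]
    exact ((integrableOn_add_rpow_Ioi_of_lt (by linarith) (by norm_num)).const_mul _).const_mul _
  exists_gap := by
    have tendsto_deriv : Tendsto (fun t : ℝ => α * (1 + t) ^ (α - 1)) atTop (nhds 0) := by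
      have tendsto_rpow : Tendsto (fun t : ℝ => (1 + t) ^ (-(1 - α))) atTop (nhds 0) :=
        (tendsto_rpow_neg_atTop (by linarith)).comp
          (tendsto_atTop_add_const_left _ 1 tendsto_id)
      simpa using tendsto_rpow.const_mul α
    refine ⟨c / 6, by positivity, ?_⟩
    filter_upwards [tendsto_deriv.eventually_le_const (show 0 < c / 6 by positivity)] with t ht
    linarith

section HeavyBall

variable {H : Type*} [NormedAddCommGroup H]

/-- The energy `W` of a trajectory `x` with velocity `x'`, where `z` is a minimizer of `Φ`. -/
noncomputable def heavyBallEnergy (Φ : H → ℝ) (z : H) (x x' : ℝ → H) (t : ℝ) : ℝ :=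
  ‖x' t‖ ^ 2 / 2 + Φ (x t) - Φ z

lemma heavyBallEnergy_nonneg {Φ : H → ℝ} {z : H} (hz : ∀ u, Φ z ≤ Φ u) (x x' : ℝ → H) (t : ℝ) :
    0 ≤ heavyBallEnergy Φ z x x' t := by
  have : 0 ≤ ‖x' t‖ ^ 2 / 2 := by positivity
  unfold heavyBallEnergy
  linarith [hz (x t)]

section NormedSpace

variable [NormedSpace ℝ H]

/-- `x`, with velocity `x'` and acceleration `x''`, solves the heavy ball equation
`x'' + γ x' + Φ'(x) = g` on `[t₀, ∞)`. -/
structure IsHeavyBallSolution (γ : ℝ → ℝ) (Φ' : H → H) (g : ℝ → H) (t₀ : ℝ)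
    (x x' x'' : ℝ → H) : Prop where
  hasDerivAt : ∀ t ∈ Ici t₀, HasDerivAt x (x' t) t
  hasDerivAt_velocity : ∀ t ∈ Ici t₀, HasDerivAt x' (x'' t) t
  equation : ∀ t ∈ Ici t₀, x'' t + γ t • x' t + Φ' (x t) = g t

/-- The vector `v = a x' + (2c/3)(x - z)` whose square enters `heavyBallLyapunov`. The factor
`2c/3` makes the terms in `⟪x', x - z⟫` cancel in the derivative of `heavyBallLyapunov`. -/
noncomputable def anchoredVelocity (c : ℝ) (a : ℝ → ℝ) (z : H) (x x' : ℝ → H) (t : ℝ) : H :=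
  a t • x' t + (2 * c / 3) • (x t - z)

/-- The Lyapunov function of the heavy ball equation with damping `c / a`, with respect to a
minimizer `z` of `Φ`. For `a t = t` and `c = 3` it is the function of Su, Boyd and Candès. -/
noncomputable def heavyBallLyapunov (c : ℝ) (a a' : ℝ → ℝ) (Φ : H → ℝ) (z : H) (x x' : ℝ → H)
    (t : ℝ) : ℝ :=
  a t ^ 2 * (Φ (x t) - Φ z) + ‖anchoredVelocity c a z x x' t‖ ^ 2 / 2
    + c / 3 * ((c / 3 - a' t) * ‖x t - z‖ ^ 2)

variable {c t₀ t δ : ℝ} {a a' γ : ℝ → ℝ} {Φ : H → ℝ} {Φ' : H → H} {z : H}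
  {g x x' x'' : ℝ → H}

lemma half_norm_sq_anchoredVelocity_le_heavyBallLyapunov (hc : 0 ≤ c) (hz : ∀ u, Φ z ≤ Φ u)
    (ha' : 0 ≤ c / 3 - a' t) :
    ‖anchoredVelocity c a z x x' t‖ ^ 2 / 2 ≤ heavyBallLyapunov c a a' Φ z x x' t := by
  have potential_nonneg := mul_nonneg (sq_nonneg (a t)) (sub_nonneg.2 (hz (x t)))
  have anchor_nonneg : 0 ≤ c / 3 * ((c / 3 - a' t) * ‖x t - z‖ ^ 2) := by positivity
  unfold heavyBallLyapunov
  linarith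

lemma heavyBallLyapunov_nonneg (hc : 0 ≤ c) (hz : ∀ u, Φ z ≤ Φ u) (ha' : 0 ≤ c / 3 - a' t) :
    0 ≤ heavyBallLyapunov c a a' Φ z x x' t :=
  le_trans (by positivity) (half_norm_sq_anchoredVelocity_le_heavyBallLyapunov hc hz ha')

lemma mul_norm_sq_sub_le_heavyBallLyapunov (hc : 0 ≤ c) (hz : ∀ u, Φ z ≤ Φ u)
    (hδ : δ ≤ c / 3 - a' t) :
    c / 3 * (δ * ‖x t - z‖ ^ 2) ≤ heavyBallLyapunov c a a' Φ z x x' t := by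
  have potential_nonneg := mul_nonneg (sq_nonneg (a t)) (sub_nonneg.2 (hz (x t)))
  calc c / 3 * (δ * ‖x t - z‖ ^ 2)
      ≤ c / 3 * ((c / 3 - a' t) * ‖x t - z‖ ^ 2) := by gcongr
    _ ≤ heavyBallLyapunov c a a' Φ z x x' t :=
      le_add_of_nonneg_left (add_nonneg potential_nonneg (by positivity))

namespace IsHeavyBallSolution

lemma continuousOn_heavyBallEnergy (hx : IsHeavyBallSolution γ Φ' g t₀ x x' x'')
    (hΦ : Continuous Φ) : ContinuousOn (heavyBallEnergy Φ z x x') (Ici t₀) := by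
  have hcont : ContinuousOn x (Ici t₀) := fun t ht =>
    (hx.hasDerivAt t ht).continuousAt.continuousWithinAt
  have hcont' : ContinuousOn x' (Ici t₀) := fun t ht =>
    (hx.hasDerivAt_velocity t ht).continuousAt.continuousWithinAt
  exact (((hcont'.norm.pow 2).div_const 2).add (hΦ.comp_continuousOn hcont)).sub
    continuousOn_const

lemma hasDerivAt_anchoredVelocity
    (hx : IsHeavyBallSolution (fun t => c / a t) Φ' g t₀ x x' x'') (ht : t ∈ Ici t₀)
    (ha₀ : a t ≠ 0) (ha : HasDerivAt a (a' t) t) :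
    HasDerivAt (anchoredVelocity c a z x x')
      ((a' t - c / 3) • x' t + a t • (g t - Φ' (x t))) t := by
  have hderiv : HasDerivAt (anchoredVelocity c a z x x')
      (a t • x'' t + a' t • x' t + (2 * c / 3) • x' t) t :=
    (ha.smul (hx.hasDerivAt_velocity t ht)).add
      (((hx.hasDerivAt t ht).sub_const z).const_smul (2 * c / 3))
  refine hderiv.congr_deriv ?_
  have damping : a t • (c / a t) • x' t = c • x' t := by rw [smul_smul, mul_div_cancel₀ _ ha₀]
  rw [← hx.equation t ht, add_sub_cancel_right, smul_add, damping]
  module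

end IsHeavyBallSolution

end NormedSpace

section InnerProductSpace

variable [InnerProductSpace ℝ H] {c t₀ t δ : ℝ} {a a' a'' : ℝ → ℝ} {Φ : H → ℝ} {Φ' : H → H}
  {z : H} {g x x' x'' : ℝ → H}

namespace IsHeavyBallSolution

lemma hasDerivAt_heavyBallLyapunov
    (hx : IsHeavyBallSolution (fun t => c / a t) Φ' g t₀ x x' x'') (ht : t ∈ Ici t₀)
    (hΦ' : HasFDerivAt Φ (innerSL ℝ (Φ' (x t))) (x t)) (ha₀ : a t ≠ 0)
    (ha : HasDerivAt a (a' t) t) (ha' : HasDerivAt a' (a'' t) t) :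
    HasDerivAt (heavyBallLyapunov c a a' Φ z x x')
      (a t * ⟪g t, anchoredVelocity c a z x x' t⟫
        - 2 * (c / 3 - a' t) * (a t * heavyBallEnergy Φ z x x' t)
        - 2 * c / 3 * a t * (Φ z - Φ (x t) - ⟪Φ' (x t), z - x t⟫)
        - c / 3 * (a'' t * ‖x t - z‖ ^ 2)) t := by
  have hpotential := (ha.pow 2).mul ((hΦ'.comp_hasDerivAt t (hx.hasDerivAt t ht)).sub_const (Φ z))
  have hvelocity := (hx.hasDerivAt_anchoredVelocity (z := z) ht ha₀ ha).norm_sq.div_const 2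
  have hanchor := ((ha'.const_sub (c / 3)).mul
    ((hx.hasDerivAt t ht).sub_const z).norm_sq).const_mul (c / 3)
  refine ((hpotential.add hvelocity).add hanchor).congr_deriv ?_
  simp only [anchoredVelocity, heavyBallEnergy, innerSL_apply_apply, Function.comp_apply,
    Pi.pow_apply, ← neg_sub (x t) z]
  generalize x t - z = d
  simp only [inner_add_left, inner_add_right, inner_sub_right, inner_neg_right,
    real_inner_smul_left, real_inner_smul_right, real_inner_self_eq_norm_sq]
  rw [real_inner_comm (x' t) (g t), real_inner_comm d (g t), real_inner_comm (x' t) (Φ' (x t)),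
    real_inner_comm d (Φ' (x t))]
  ring

lemma deriv_one_add_heavyBallLyapunov_le
    (hx : IsHeavyBallSolution (fun t => c / a t) Φ' g t₀ x x' x'') (ht : t ∈ Ici t₀)
    (hc : 0 ≤ c) (hΦconv : ConvexOn ℝ univ Φ) (hz : ∀ u, Φ z ≤ Φ u)
    (hΦ' : HasFDerivAt Φ (innerSL ℝ (Φ' (x t))) (x t)) (ha₀ : 0 < a t)
    (ha : HasDerivAt a (a' t) t) (ha' : HasDerivAt a' (a'' t) t)
    (hδ : 0 < δ) (hgap : δ ≤ c / 3 - a' t) :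
    deriv (fun t => 1 + heavyBallLyapunov c a a' Φ z x x' t) t
      ≤ (a t * ‖g t‖ + |a'' t| / δ) * (1 + heavyBallLyapunov c a a' Φ z x x' t)
        - 2 * δ * (a t * heavyBallEnergy Φ z x x' t) := by
  rw [((hx.hasDerivAt_heavyBallLyapunov ht hΦ' ha₀.ne' ha ha').const_add 1).deriv]
  set v := anchoredVelocity c a z x x' t
  set E := heavyBallLyapunov c a a' Φ z x x' t
  have velocity_le : ‖v‖ ^ 2 / 2 ≤ E :=
    half_norm_sq_anchoredVelocity_le_heavyBallLyapunov hc hz (hδ.le.trans hgap)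
  have anchor_le : c / 3 * (δ * ‖x t - z‖ ^ 2) ≤ E :=
    mul_norm_sq_sub_le_heavyBallLyapunov hc hz hgap
  have source_le : a t * ⟪g t, v⟫ ≤ a t * ‖g t‖ * (1 + E) := by
    have norm_le : ‖v‖ ≤ 1 + E := by nlinarith [sq_nonneg (‖v‖ - 1)]
    calc a t * ⟪g t, v⟫ ≤ a t * (‖g t‖ * ‖v‖) := by gcongr; exact real_inner_le_norm _ _
      _ ≤ a t * (‖g t‖ * (1 + E)) := by gcongr
      _ = a t * ‖g t‖ * (1 + E) := by ring
  have energy_le : 2 * δ * (a t * heavyBallEnergy Φ z x x' t)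
      ≤ 2 * (c / 3 - a' t) * (a t * heavyBallEnergy Φ z x x' t) := by
    gcongr
    exact mul_nonneg ha₀.le (heavyBallEnergy_nonneg hz x x' t)
  have convexity_nonneg : 0 ≤ 2 * c / 3 * a t * (Φ z - Φ (x t) - ⟪Φ' (x t), z - x t⟫) :=
    mul_nonneg (by positivity) <| sub_nonneg.2 <|
      apply_sub_le_sub_of_convexOn hΦconv (mem_univ _) (mem_univ _) hΦ'
  have curvature_le : -(c / 3 * (a'' t * ‖x t - z‖ ^ 2)) ≤ |a'' t| / δ * (1 + E) :=
    calc -(c / 3 * (a'' t * ‖x t - z‖ ^ 2)) = -a'' t * (c / 3 * ‖x t - z‖ ^ 2) := by ring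
      _ ≤ |a'' t| * (c / 3 * ‖x t - z‖ ^ 2) := by gcongr; exact neg_le_abs _
      _ = |a'' t| / δ * (c / 3 * (δ * ‖x t - z‖ ^ 2)) := by field_simp
      _ ≤ |a'' t| / δ * (1 + E) := by gcongr; linarith
  linarith

end IsHeavyBallSolution

end InnerProductSpace

end HeavyBall

theorem heavy_ball_energy_integrable_general {H : Type*} [NormedAddCommGroup H]
    [InnerProductSpace ℝ H] {c t₀ : ℝ} {a a' a'' : ℝ → ℝ} {Φ : H → ℝ} {Φ' : H → H} {z : H}
    {g x x' x'' : ℝ → H} (hc : 0 < c) (ha : IsDissipativeScale c t₀ a a' a'')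
    (hΦconv : ConvexOn ℝ univ Φ) (hΦ' : ∀ u, HasFDerivAt Φ (innerSL ℝ (Φ' u)) u)
    (hz : ∀ u, Φ z ≤ Φ u) (hx : IsHeavyBallSolution (fun t => c / a t) Φ' g t₀ x x' x'')
    (hg : IntegrableOn (fun t => a t * ‖g t‖) (Ici t₀)) :
    IntegrableOn (fun t => a t * heavyBallEnergy Φ z x x' t) (Ici t₀) := by
  obtain ⟨δ, hδ, hgap⟩ := ha.exists_gap
  have hΦ : Continuous Φ := continuous_iff_continuousAt.2 fun u => (hΦ' u).continuousAt
  have hcont : ContinuousOn (fun t => a t * heavyBallEnergy Φ z x x' t) (Ici t₀) :=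
    ContinuousOn.mul (fun t ht => (ha.hasDerivAt t ht).continuousAt.continuousWithinAt)
      (hx.continuousOn_heavyBallEnergy hΦ)
  have hk : IntegrableOn (fun t => a t * ‖g t‖ + |a'' t| / δ) (Ici t₀) :=
    hg.add (ha.integrableOn_deriv_deriv.abs.div_const δ)
  have hdissipated :
      IntegrableOn (fun t => 2 * δ * (a t * heavyBallEnergy Φ z x x' t)) (Ici t₀) := by
    refine integrableOn_Ici_of_deriv_le_mul_sub
      (F := fun t => 1 + heavyBallLyapunov c a a' Φ z x x' t) ?_ ?_ (hcont.const_mul _) ?_ hk ?_ ?_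
    all_goals filter_upwards [Ici_mem_atTop t₀, hgap] with t ht hgap
    all_goals have ha₀ := ha.pos t ht
    · exact ((hx.hasDerivAt_heavyBallLyapunov ht (hΦ' _) ha₀.ne' (ha.hasDerivAt t ht)
        (ha.hasDerivAt_deriv t ht)).const_add 1).differentiableAt
    · exact add_nonneg zero_le_one (heavyBallLyapunov_nonneg hc.le hz (hδ.le.trans hgap))
    · have := heavyBallEnergy_nonneg hz x x' t
      positivity
    · positivity
    · exact hx.deriv_one_add_heavyBallLyapunov_le ht hc.le hΦconv hz (hΦ' _) ha₀
        (ha.hasDerivAt t ht) (ha.hasDerivAt_deriv t ht) hδ hgap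
  exact (integrable_const_mul_iff (IsUnit.mk0 _ (by positivity)) _).1 hdissipated

theorem heavy_ball_energy_integrable
    {H : Type*} [NormedAddCommGroup H] [InnerProductSpace ℝ H] [CompleteSpace H]
    (c α : ℝ) (hc : 0 < c) (hα0 : 0 ≤ α) (hα1 : α < 1)
    (Φ : H → ℝ) (Φ' : H → H) (Φstar : ℝ)
    (hΦconv : ConvexOn ℝ Set.univ Φ)
    (hΦdiff : ∀ u : H, HasGradientAt Φ (Φ' u) u)
    (hΦcont : Continuous Φ')
    (hargmin : {v : H | ∀ u, Φ v ≤ Φ u}.Nonempty)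
    (hΦstar : ∀ v ∈ {v : H | ∀ u, Φ v ≤ Φ u}, Φ v = Φstar)
    (g : ℝ → H) (hg : IntegrableOn g (Ici (0:ℝ)))
    (x x' x'' : ℝ → H)
    (hx1 : ∀ t ∈ Ici (0:ℝ), HasDerivAt x (x' t) t)
    (hx2 : ∀ t ∈ Ici (0:ℝ), HasDerivAt x' (x'' t) t)
    (hode : ∀ t ∈ Ici (0:ℝ),
      x'' t + (c / (1 + t) ^ α) • x' t + Φ' (x t) = g t)
    (hgα : IntegrableOn (fun t => (1 + t) ^ α * ‖g t‖) (Ici (0:ℝ))) :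
    IntegrableOn (fun t => (1 + t) ^ α * (‖x' t‖ ^ 2 / 2 + Φ (x t) - Φstar))
      (Ici (0:ℝ)) := by
  obtain ⟨z, hz⟩ := hargmin
  rw [← hΦstar z hz]
  exact heavy_ball_energy_integrable_general hc (isDissipativeScale_one_add_rpow hc hα1) hΦconv
    (fun u => (hΦdiff u).hasFDerivAt) hz ⟨hx1, hx2, hode⟩ hgα
end
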